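/- Suppose r ≥ 3 is odd, and let φ : Cl ≃ Matrix (Fin 2^r) ℂ be any ℂ-algebra isomorphism with Φ the induced isomorphism of Cl ⊗ Cl onto Matrix ((Fin 2^r) × (Fin 2^r)) ℂ. Then for each ε ∈ {+1,−1}: Tr Φ(p_{ε,−ε}·P_{2m}) = (2r)!/((2m)!(2r−2m)!) for 0 ≤ m ≤ (r−1)/2; Tr Φ(p_{εε}·P_{2m−1}) = (2r)!/((2m−1)!(2r−2m+1)!) for 1 ≤ m ≤ (r−1)/2; and Tr Φ(p_{εε}·P_r) = (2r)!/(2·(r!)^2). -/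

import Mathlib

open scoped TensorProduct

noncomputable section

/-- The quadratic form `x₁² + ⋯ + x_{2r}²` on `ℂ^{2r}`. -/
def Qf (r : ℕ) : QuadraticForm ℂ (Fin (2*r) → ℂ) :=
  QuadraticMap.weightedSumSquares ℂ (fun _ : Fin (2*r) => (1:ℂ))

/-- The Clifford algebra of `Qf r`. -/
abbrev Cl (r : ℕ) := CliffordAlgebra (Qf r)

/-- The generators `Γ_i`. -/
def Γgen (r : ℕ) (i : Fin (2*r)) : Cl r :=
  CliffordAlgebra.ι (Qf r) (Pi.single i 1)

/-- The antisymmetrised products `Γ_{[i₁…i_k]}`. -/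
def Γbr (r k : ℕ) (i : Fin k → Fin (2*r)) : Cl r :=
  ((k.factorial : ℂ))⁻¹ •
    ∑ σ : Equiv.Perm (Fin k),
      ((Equiv.Perm.sign σ : ℤ) : ℂ) • (List.ofFn fun j => Γgen r (i (σ j))).prod

/-- The invariants `I_k ∈ Cl ⊗ Cl`. -/
def Ik (r k : ℕ) : Cl r ⊗[ℂ] Cl r :=
  ∑ i : Fin k → Fin (2*r), (Γbr r k i) ⊗ₜ[ℂ] (Γbr r k i)

/-- The split Casimir element `Ĉ = −I₂/(16(2r−2))`. -/
def sC (r : ℕ) : Cl r ⊗[ℂ] Cl r := (-(16*(2*(r:ℂ)-2))⁻¹) • Ik r 2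

/-- The top element `Γ_{2r+1} = (−i)^r Γ₁⋯Γ_{2r}`. -/
def Γtop (r : ℕ) : Cl r :=
  ((-Complex.I)^r) • (List.ofFn fun i : Fin (2*r) => Γgen r i).prod

/-- The chirality projector `p_ε = (1 + ε Γ_{2r+1})/2`. -/
def pCh (r : ℕ) (ε : ℂ) : Cl r := (2:ℂ)⁻¹ • (1 + ε • Γtop r)

/-- The chirality projectors `p_{εε'} = p_ε ⊗ p_{ε'}`. -/
def ppCh (r : ℕ) (ε ε' : ℂ) : Cl r ⊗[ℂ] Cl r := (pCh r ε) ⊗ₜ[ℂ] (pCh r ε')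

/-- The eigenvalues `c_k = (2k(2r−k) − r(2r−1))/(16(r−1))`. -/
def cEv (r k : ℕ) : ℂ :=
  (2*(k:ℂ)*(2*(r:ℂ)-(k:ℂ)) - (r:ℂ)*(2*(r:ℂ)-1)) / (16*((r:ℂ)-1))

/-- The spectral projectors `P_k = Π_{j≠k} (Ĉ − c_j)/(c_k − c_j)`. -/
def Pk (r k : ℕ) : Cl r ⊗[ℂ] Cl r :=
  (((List.range (r+1)).filter (fun j => j ≠ k)).map
    (fun j => (cEv r k - cEv r j)⁻¹ • (sC r - cEv r j • 1))).prod

/-- `P_r^S = (p_{++} + p_{−−})·P_r`. -/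
def PrS (r : ℕ) : Cl r ⊗[ℂ] Cl r := (ppCh r 1 1 + ppCh r (-1) (-1)) * Pk r r

/-- The ascending factorial `a_k(u) = (u/2)(u/2+1)⋯(u/2+k−1)`. -/
def asc (u : ℂ) (k : ℕ) : ℂ := ∏ j ∈ Finset.range k, (u/2 + (j:ℂ))

/-!
The elements `Γ_i ⊗ Γ_i` are `2r` commuting involutions, and every nontrivial monomial in them is
traceless: some invertible element anticommutes with it. Hence the trace of a polynomial in these
involutions is the average of the values of the polynomial over all sign vectors. The split Casimir
element is such a polynomial and takes the value `c_k` at a sign vector with `k` entries `-1`, so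
that `P_k` becomes the indicator of the sign vectors with `k` or `2r - k` entries `-1`. In the
expansion of `p_{εε'}` the terms linear in `Γ_{2r+1}` are traceless, and
`Γ_{2r+1} ⊗ Γ_{2r+1} = (-1)^r ∏ Γ_i ⊗ Γ_i` has the value `(-1)^(r+k)` on both families.
-/

section CommutingInvolutions

open MvPolynomial

section Eval

variable {ι R T : Type*} [CommSemiring R] [Semiring T] [Algebra R T]

open scoped IsMulCommutative in
/-- Evaluation of multivariate polynomials at pairwise commuting elements of an algebra that need
not be commutative itself; `MvPolynomial.aeval` is applied in the subalgebra they generate. -/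
def aevalOfCommute (u : ι → T) (hu : ∀ i j, Commute (u i) (u j)) : MvPolynomial ι R →ₐ[R] T :=
  have : IsMulCommutative (Algebra.adjoin R (Set.range u)) :=
    Algebra.isMulCommutative_adjoin R (by
      rintro _ ⟨i, rfl⟩ _ ⟨j, rfl⟩
      exact hu i j)
  (Algebra.adjoin R (Set.range u)).val.comp
    (aeval fun i => ⟨u i, Algebra.subset_adjoin ⟨i, rfl⟩⟩)

lemma aevalOfCommute_X (u : ι → T) (hu : ∀ i j, Commute (u i) (u j)) (i : ι) :
    aevalOfCommute (R := R) u hu (X i) = u i := by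
  simp [aevalOfCommute]

lemma semiconjBy_of_semiconjBy_X {F G : MvPolynomial ι R →ₐ[R] T} {g : T}
    (hg : ∀ j, SemiconjBy g (F (X j)) (G (X j))) (f : MvPolynomial ι R) :
    SemiconjBy g (F f) (G f) := by
  induction f using MvPolynomial.induction_on with
  | C a =>
    rw [algHom_C, algHom_C]
    exact Algebra.commute_algebraMap_right a g
  | add p q hp hq => simpa using hp.add_right hq
  | mul_X p j hp => simpa using hp.mul_right (hg j)

lemma aeval_smul_X_monomial (s : ι → R) (d : ι →₀ ℕ) :
    aeval (fun j => s j • X j) (monomial d (1 : R)) =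
      eval s (monomial d 1) • (monomial d 1 : MvPolynomial ι R) := by
  rw [aeval_monomial, eval_monomial, map_one, one_mul, one_mul, monomial_eq, C_1, one_mul]
  simp only [Finsupp.prod, smul_pow, Finset.prod_smul]

end Eval

section Sign

variable {ι K : Type*} [DecidableEq ι]

/-- The sign vector with entries `-1` on `A` and `1` off `A`; it encodes a joint eigenvalue of a
family of involutions. -/
def signVec [Ring K] (A : Finset ι) (i : ι) : K := if i ∈ A then -1 else 1

lemma sum_signVec [Fintype ι] [Ring K] (A : Finset ι) :
    ∑ i, signVec A i = (Fintype.card ι - 2 * A.card : K) := by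
  have h (i : ι) : signVec A i = (1 - 2 * if i ∈ A then 1 else 0 : K) := by
    unfold signVec
    split_ifs <;> norm_num
  simp only [h, Finset.sum_sub_distrib, ← Finset.mul_sum, Finset.sum_boole]
  simp

variable [CommRing K]

lemma prod_signVec [Fintype ι] (A : Finset ι) : ∏ i, signVec A i = (-1 : K) ^ A.card := by
  simp [signVec]

lemma eval_signVec_monomial (A : Finset ι) (d : ι →₀ ℕ) :
    eval (signVec A) (monomial d (1 : K)) = ∏ i ∈ A, (-1) ^ d i := by
  rw [eval_monomial, one_mul,
    Finsupp.prod_of_support_subset d (s := d.support ∪ A) Finset.subset_union_left _ (by simp)]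
  simp [signVec, ite_pow, Finset.prod_ite_mem]

lemma sum_eval_signVec_monomial [Fintype ι] (d : ι →₀ ℕ) :
    ∑ A, eval (signVec A) (monomial d (1 : K)) = ∏ i, (1 + (-1) ^ d i) := by
  simp_rw [eval_signVec_monomial, Finset.prod_one_add, Finset.powerset_univ]

end Sign

section Trace

/-- A linear functional invariant under cyclic permutation of products, such as the trace of a
matrix representation. -/
def IsTracial {R T : Type*} [CommSemiring R] [Semiring T] [Algebra R T] (τ : T →ₗ[R] R) : Prop :=
  ∀ x y, τ (x * y) = τ (y * x)

lemma map_monomial_eq_one_of_even {ι R T : Type*} [CommSemiring R] [Semiring T] [Algebra R T]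
    {F : MvPolynomial ι R →ₐ[R] T} (hF : ∀ i, F (X i) * F (X i) = 1) {d : ι →₀ ℕ}
    (hd : ∀ i, Even (d i)) : F (monomial d 1) = 1 := by
  rw [monomial_eq, C_1, one_mul]
  refine Finset.prod_induction _ (F · = 1) (fun p q hp hq => ?_) (map_one F) fun i _ => ?_
  · rw [map_mul, hp, hq, one_mul]
  · obtain ⟨m, hm⟩ := hd i
    simp only [hm, map_pow, pow_add, ← mul_pow, hF, one_pow, map_mul]

variable {ι K T : Type*} [DecidableEq ι] [Field K] [NeZero (2 : K)] [Ring T]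
  [Algebra K T] {τ : T →ₗ[K] K}

lemma IsTracial.apply_eq_zero_of_mul_eq_neg_mul (hτ : IsTracial τ) {g x : T}
    (hg : IsUnit g) (h : g * x = -(x * g)) : τ x = 0 := by
  obtain ⟨g, rfl⟩ := hg
  have hneg : τ x = -τ x := calc
    τ x = τ (↑g⁻¹ * (g * x)) := by rw [Units.inv_mul_cancel_left]
    _ = -τ (g⁻¹ * (x * g)) := by rw [h, mul_neg, map_neg]
    _ = -τ x := by rw [hτ, Units.mul_inv_cancel_right]
  have h2 : 2 * τ x = 0 := by linear_combination hneg
  exact (mul_eq_zero.mp h2).resolve_left two_ne_zero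

variable {F : MvPolynomial ι K →ₐ[K] T}

lemma IsTracial.apply_monomial_eq_zero_of_odd (hτ : IsTracial τ) {g : T} (hg : IsUnit g)
    {i : ι} (hgF : ∀ j, g * F (X j) = (signVec {i} j : K) • (F (X j) * g)) {d : ι →₀ ℕ}
    (hd : Odd (d i)) : τ (F (monomial d 1)) = 0 := by
  have hflip := semiconjBy_of_semiconjBy_X (F := F) (g := g)
    (G := F.comp (aeval fun j => (signVec {i} j : K) • X j))
    (fun j => by simpa [SemiconjBy] using hgF j) (monomial d 1)
  rw [AlgHom.comp_apply, aeval_smul_X_monomial, eval_signVec_monomial, Finset.prod_singleton,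
    hd.neg_one_pow, neg_one_smul, map_neg] at hflip
  exact hτ.apply_eq_zero_of_mul_eq_neg_mul hg (by simpa [SemiconjBy] using hflip)

/-- Both sides vanish on a monomial with an odd exponent, and on the others `F` is `1`. -/
theorem IsTracial.apply_eq_average_eval_signVec [Fintype ι] (hF : ∀ i, F (X i) * F (X i) = 1)
    (hτ : IsTracial τ) {g : ι → T} (hg : ∀ i, IsUnit (g i))
    (hgF : ∀ i j, g i * F (X j) = (signVec {i} j : K) • (F (X j) * g i))
    (f : MvPolynomial ι K) :
    τ (F f) = τ 1 / 2 ^ Fintype.card ι * ∑ A, eval (signVec A) f := by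
  induction f using MvPolynomial.induction_on' with
  | add p q hp hq => simp only [map_add, Finset.sum_add_distrib, mul_add, hp, hq]
  | monomial d a =>
    have key : τ (F (monomial d 1)) =
        τ 1 / 2 ^ Fintype.card ι * ∑ A, eval (signVec A) (monomial d (1 : K)) := by
      rw [sum_eval_signVec_monomial]
      by_cases hd : ∀ i, Even (d i)
      · have h2 : (2 : K) ^ Fintype.card ι ≠ 0 := pow_ne_zero _ two_ne_zero
        simp [map_monomial_eq_one_of_even hF hd, (hd _).neg_one_pow, one_add_one_eq_two, h2]
      · obtain ⟨i, hi⟩ := not_forall.mp hd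
        rw [Nat.not_even_iff_odd] at hi
        rw [hτ.apply_monomial_eq_zero_of_odd (hg i) (hgF i) hi,
          Finset.prod_eq_zero (Finset.mem_univ i) (by simp [hi.neg_one_pow]), mul_zero]
    rw [← mul_one a, ← smul_eq_mul, ← smul_monomial]
    simp only [map_smul, smul_eval, smul_eq_mul, key, ← Finset.mul_sum]
    ring

end Trace

end CommutingInvolutions

section TensorSquare

variable {R A : Type*} [CommSemiring R] [Semiring A] [Algebra R A]

variable (R A) in
/-- The diagonal embedding `a ↦ a ⊗ a`, which is multiplicative but not additive. -/
def tensorSquare : A →* A ⊗[R] A where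
  toFun a := a ⊗ₜ a
  map_one' := Algebra.TensorProduct.one_def.symm
  map_mul' a b := (Algebra.TensorProduct.tmul_mul_tmul a b a b).symm

lemma tensorSquare_apply (a : A) : tensorSquare R A a = a ⊗ₜ a := rfl

lemma tensorSquare_smul (c : R) (a : A) :
    tensorSquare R A (c • a) = c ^ 2 • tensorSquare R A a := by
  rw [tensorSquare_apply, TensorProduct.smul_tmul_smul, ← pow_two, tensorSquare_apply]

lemma mul_prod_ofFn_of_mul_eq_smul {n : ℕ} {f : Fin n → A} {s : Fin n → R} {g : A}
    (h : ∀ i, g * f i = s i • (f i * g)) :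
    g * (List.ofFn f).prod = (∏ i, s i) • ((List.ofFn f).prod * g) := by
  induction n with
  | zero => simp
  | succ n ih =>
    rw [List.ofFn_succ, List.prod_cons, Fin.prod_univ_succ, ← mul_assoc, h, smul_mul_assoc,
      mul_assoc, ih fun i => h i.succ, mul_smul_comm, smul_smul, mul_assoc]

end TensorSquare

section Gamma

variable {r : ℕ}

lemma Γgen_mul_self (i : Fin (2 * r)) : Γgen r i * Γgen r i = 1 := by
  have hQ : Qf r (Pi.single i 1) = 1 := by
    simp [Qf, QuadraticMap.weightedSumSquares_apply, Pi.single_apply]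
  rw [Γgen, CliffordAlgebra.ι_sq_scalar, hQ, map_one]

lemma Γgen_mul_Γgen_of_ne {i j : Fin (2 * r)} (h : i ≠ j) :
    Γgen r i * Γgen r j = -(Γgen r j * Γgen r i) := by
  refine CliffordAlgebra.ι_mul_ι_comm_of_isOrtho ?_
  simp [QuadraticMap.isOrtho_def, Qf, QuadraticMap.weightedSumSquares_apply, Pi.single_apply,
    mul_add, Finset.sum_add_distrib, h, h.symm]

lemma Γgen_mul_Γgen (i j : Fin (2 * r)) :
    Γgen r i * Γgen r j = (-signVec {i} j : ℂ) • (Γgen r j * Γgen r i) := by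
  rcases eq_or_ne i j with rfl | h
  · simp [signVec]
  · simp [signVec, h.symm, Γgen_mul_Γgen_of_ne h]

lemma Γgen_mul_Γtop (i : Fin (2 * r)) : Γgen r i * Γtop r = -(Γtop r * Γgen r i) := by
  have hsign : ∏ j, (-signVec {i} j : ℂ) = -1 := by
    simp [Finset.prod_neg, prod_signVec]
  rw [Γtop, mul_smul_comm, mul_prod_ofFn_of_mul_eq_smul (Γgen_mul_Γgen i), hsign, neg_one_smul,
    smul_neg, smul_mul_assoc]

lemma isUnit_Γgen (i : Fin (2 * r)) : IsUnit (Γgen r i) :=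
  ⟨⟨_, _, Γgen_mul_self i, Γgen_mul_self i⟩, rfl⟩

lemma isUnit_Γtop : IsUnit (Γtop r) := by
  rw [Γtop, Algebra.smul_def]
  refine IsUnit.mul (IsUnit.map _ (IsUnit.pow _ (by simp))) (List.prod_isUnit ?_)
  simp only [List.mem_ofFn]
  rintro _ ⟨i, rfl⟩
  exact isUnit_Γgen i

lemma Γbr_two (i : Fin 2 → Fin (2 * r)) :
    Γbr r 2 i = if i 0 = i 1 then 0 else Γgen r (i 0) * Γgen r (i 1) := by
  have hperm : (Finset.univ : Finset (Equiv.Perm (Fin 2))) = {1, Equiv.swap 0 1} := by decide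
  rw [Γbr, hperm, Finset.sum_pair (by decide)]
  split_ifs with h
  · simp [h]
  · simp [List.ofFn_succ, Equiv.Perm.sign_swap (zero_ne_one (α := Fin 2)),
      Γgen_mul_Γgen_of_ne (Ne.symm h), ← two_smul ℂ, smul_smul]

end Gamma

section Diagonal

open MvPolynomial

variable {r : ℕ}

lemma commute_tensorSquare_Γgen (i j : Fin (2 * r)) :
    Commute (tensorSquare ℂ _ (Γgen r i)) (tensorSquare ℂ _ (Γgen r j)) := by
  have hsq : (-signVec {i} j : ℂ) ^ 2 = 1 := by
    unfold signVec
    split_ifs <;> norm_num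
  rw [Commute, SemiconjBy, ← map_mul, Γgen_mul_Γgen, tensorSquare_smul, hsq, one_smul, map_mul]

variable (r) in
/-- Evaluation of polynomials at the commuting involutions `Γ_i ⊗ Γ_i`. The split Casimir element,
its spectral projectors and `Γ_{2r+1} ⊗ Γ_{2r+1}` all lie in its range. -/
def diagEval : MvPolynomial (Fin (2 * r)) ℂ →ₐ[ℂ] Cl r ⊗[ℂ] Cl r :=
  aevalOfCommute (fun i => tensorSquare ℂ _ (Γgen r i)) commute_tensorSquare_Γgen

lemma diagEval_X (i : Fin (2 * r)) : diagEval r (X i) = tensorSquare ℂ _ (Γgen r i) :=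
  aevalOfCommute_X _ _ i

lemma diagEval_X_mul_self (i : Fin (2 * r)) : diagEval r (X i) * diagEval r (X i) = 1 := by
  rw [diagEval_X, ← map_mul, Γgen_mul_self, map_one]

lemma Γtop_tmul_Γtop : Γtop r ⊗ₜ[ℂ] Γtop r = (-1 : ℂ) ^ r • diagEval r (∏ i, X i) := by
  have hI : ((-Complex.I) ^ r) ^ 2 = (-1) ^ r := by rw [pow_right_comm, neg_sq, Complex.I_sq]
  rw [← tensorSquare_apply, Γtop, tensorSquare_smul, hI, map_list_prod, List.map_ofFn,
    ← List.prod_ofFn, map_list_prod, List.map_ofFn]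
  simp only [Function.comp_def, diagEval_X]

lemma Ik_two : Ik r 2 = diagEval r ((∑ i, X i) ^ 2 - 2 * (r : MvPolynomial (Fin (2 * r)) ℂ)) := by
  have hterm (i : Fin 2 → Fin (2 * r)) : Γbr r 2 i ⊗ₜ[ℂ] Γbr r 2 i =
      diagEval r (X (i 0)) * diagEval r (X (i 1)) - if i 0 = i 1 then 1 else 0 := by
    rw [Γbr_two]
    split_ifs with h
    · simp [h, diagEval_X_mul_self]
    · simp [diagEval_X, tensorSquare_apply]
  rw [Ik, Finset.sum_congr rfl fun i _ => hterm i,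
    ← (finTwoArrowEquiv (Fin (2 * r))).symm.sum_comp]
  have h2 : diagEval r 2 = 2 := map_ofNat _ 2
  simp only [finTwoArrowEquiv_symm_apply, Matrix.cons_val_zero, Matrix.cons_val_one,
    Fintype.sum_prod_type, Finset.sum_sub_distrib, Finset.sum_ite_eq, Finset.mem_univ, if_true,
    map_sub, map_sum, pow_two, Finset.sum_mul_sum]
  simp [h2]

variable (r) in
/-- The polynomial in the involutions `Γ_i ⊗ Γ_i` whose value is the split Casimir element. -/
def casimirPoly : MvPolynomial (Fin (2 * r)) ℂ :=
  C (-(16 * (2 * (r : ℂ) - 2))⁻¹) * ((∑ i, X i) ^ 2 - 2 * (r : MvPolynomial (Fin (2 * r)) ℂ))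

lemma sC_eq_diagEval : sC r = diagEval r (casimirPoly r) := by
  rw [sC, Ik_two, casimirPoly, C_mul', map_smul]

lemma eval_casimirPoly (A : Finset (Fin (2 * r))) :
    eval (signVec A) (casimirPoly r) = cEv r A.card := by
  have h2 : (16 * (2 * (r : ℂ) - 2))⁻¹ = 2⁻¹ * (16 * ((r : ℂ) - 1))⁻¹ := by
    rw [← mul_inv]
    ring
  simp only [casimirPoly, map_mul, map_sub, map_pow, map_sum, eval_C, eval_X, map_ofNat,
    map_natCast, sum_signVec,
    Fintype.card_fin, h2, cEv]
  push_cast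
  ring

variable {τ : Cl r ⊗[ℂ] Cl r →ₗ[ℂ] ℂ}

/-- Multiplying `Γ_i` by `Γ_{2r+1}` reverses every commutation sign, so that `Γ_{2r+1}Γ_i ⊗ 1`
anticommutes with `Γ_i ⊗ Γ_i` alone. -/
lemma IsTracial.apply_diagEval (hτ : IsTracial τ) (f : MvPolynomial (Fin (2 * r)) ℂ) :
    τ (diagEval r f) = τ 1 / 4 ^ r * ∑ A, eval (signVec A) f := by
  rw [hτ.apply_eq_average_eval_signVec diagEval_X_mul_self
    (g := fun i => (Γtop r * Γgen r i) ⊗ₜ 1) ?_ ?_, Fintype.card_fin, pow_mul]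
  · norm_num
  · intro i
    exact (isUnit_Γtop.mul (isUnit_Γgen i)).map
      (Algebra.TensorProduct.includeLeft : Cl r →ₐ[ℂ] Cl r ⊗[ℂ] Cl r)
  · intro i j
    have hj : Γtop r * Γgen r i * Γgen r j =
        (signVec {i} j : ℂ) • (Γgen r j * (Γtop r * Γgen r i)) := by
      rw [mul_assoc, Γgen_mul_Γgen, mul_smul_comm, ← mul_assoc, ← mul_assoc, Γgen_mul_Γtop,
        neg_smul, neg_mul, smul_neg]
    simp only [diagEval_X, tensorSquare_apply, Algebra.TensorProduct.tmul_mul_tmul, one_mul,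
      mul_one, hj, TensorProduct.smul_tmul']

lemma IsTracial.apply_mul_diagEval_eq_zero (hτ : IsTracial τ) {x : Cl r ⊗[ℂ] Cl r}
    {i : Fin (2 * r)} (hx : diagEval r (X i) * x = -(x * diagEval r (X i)))
    (f : MvPolynomial (Fin (2 * r)) ℂ) : τ (x * diagEval r f) = 0 := by
  have hunit : IsUnit (diagEval r (X i)) :=
    ⟨⟨_, _, diagEval_X_mul_self i, diagEval_X_mul_self i⟩, rfl⟩
  refine hτ.apply_eq_zero_of_mul_eq_neg_mul hunit ?_
  rw [← mul_assoc, hx, neg_mul, mul_assoc, mul_assoc, ← map_mul, ← map_mul, mul_comm (X i)]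

lemma ppCh_eq (ε ε' : ℂ) :
    ppCh r ε ε' = (4 : ℂ)⁻¹ • (1 + ε • (Γtop r ⊗ₜ[ℂ] 1) + ε' • ((1 : Cl r) ⊗ₜ[ℂ] Γtop r) +
      (ε * ε') • (Γtop r ⊗ₜ[ℂ] Γtop r)) := by
  rw [ppCh, pCh, pCh, TensorProduct.smul_tmul_smul, TensorProduct.add_tmul,
    TensorProduct.tmul_add, TensorProduct.tmul_add, TensorProduct.smul_tmul_smul,
    TensorProduct.tmul_smul, ← TensorProduct.smul_tmul', Algebra.TensorProduct.one_def]
  congr 1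
  · norm_num
  · abel

lemma IsTracial.apply_ppCh_mul_diagEval (hr : 0 < r) (hτ : IsTracial τ) (ε ε' : ℂ)
    (f : MvPolynomial (Fin (2 * r)) ℂ) :
    τ (ppCh r ε ε' * diagEval r f) = τ 1 / 4 ^ r *
      ∑ A : Finset (Fin (2 * r)), (1 + ε * ε' * (-1) ^ (r + A.card)) / 4 * eval (signVec A) f := by
  let i : Fin (2 * r) := ⟨0, by omega⟩
  have hleft : τ ((Γtop r ⊗ₜ 1) * diagEval r f) = 0 :=
    hτ.apply_mul_diagEval_eq_zero (i := i)
      (by simp [diagEval_X, tensorSquare_apply, Γgen_mul_Γtop, TensorProduct.neg_tmul]) f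
  have hright : τ ((1 ⊗ₜ Γtop r) * diagEval r f) = 0 :=
    hτ.apply_mul_diagEval_eq_zero (i := i)
      (by simp [diagEval_X, tensorSquare_apply, Γgen_mul_Γtop, TensorProduct.tmul_neg]) f
  have hboth : τ ((Γtop r ⊗ₜ Γtop r) * diagEval r f) = τ 1 / 4 ^ r *
      ∑ A : Finset (Fin (2 * r)), (-1) ^ (r + A.card) * eval (signVec A) f := by
    rw [Γtop_tmul_Γtop, ← map_smul, ← map_mul, hτ.apply_diagEval]
    simp only [map_mul, smul_eval, map_prod, eval_X, prod_signVec, pow_add]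
  have hsum : ∑ A : Finset (Fin (2 * r)),
        (1 + ε * ε' * (-1) ^ (r + A.card)) / 4 * eval (signVec A) f =
      4⁻¹ * (∑ A, eval (signVec A) f +
        ε * ε' * ∑ A : Finset (Fin (2 * r)), (-1) ^ (r + A.card) * eval (signVec A) f) := by
    simp only [Finset.mul_sum, ← Finset.sum_add_distrib]
    refine Finset.sum_congr rfl fun A _ => ?_
    ring
  rw [ppCh_eq, hsum]
  simp only [smul_mul_assoc, add_mul, one_mul, map_smul, map_add, hleft, hright, hboth,
    hτ.apply_diagEval, smul_eq_mul]
  ring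

end Diagonal

lemma card_filter_card_eq_or_add_eq {α : Type*} [Fintype α] {k : ℕ}
    (hk : 2 * k < Fintype.card α) :
    (Finset.univ.filter fun A : Finset α => A.card = k ∨ A.card + k = Fintype.card α).card =
      2 * (Fintype.card α).choose k := by
  have hcompl (A : Finset α) : A.card + k = Fintype.card α ↔ A.card = Fintype.card α - k := by
    omega
  classical
  simp only [hcompl, Finset.filter_or]
  rw [Finset.card_union_of_disjoint (Finset.disjoint_filter.mpr fun A _ h h' => by omega)]
  simp only [Finset.univ_filter_card_eq, Finset.card_powersetCard, Finset.card_univ]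
  rw [Nat.choose_symm (by omega), two_mul]

section Spectrum

open Polynomial

lemma cEv_eq_cEv_iff {r : ℕ} (hr : 2 ≤ r) {j k : ℕ} :
    cEv r j = cEv r k ↔ j = k ∨ j + k = 2 * r := by
  have hr1 : (16 * ((r : ℂ) - 1)) ≠ 0 :=
    mul_ne_zero (by norm_num) (sub_ne_zero.mpr (by norm_cast; omega))
  rw [cEv, cEv, div_left_inj' hr1]
  constructor
  · intro h
    have hfactor : ((j : ℂ) - k) * (j + k - 2 * r) = 0 := by linear_combination -h / 2
    refine (mul_eq_zero.mp hfactor).imp (fun h => ?_) fun h => ?_ <;>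
    exact_mod_cast sub_eq_zero.mp h
  · rintro (rfl | h)
    · rfl
    · have hsum : (j : ℂ) + k = 2 * r := by exact_mod_cast h
      linear_combination 2 * ((k : ℂ) - j) * hsum

lemma Pk_eq_aeval (r k : ℕ) :
    Pk r k = aeval (sC r) (Lagrange.basis (Finset.range (r + 1)) (cEv r) k) := by
  have hlist : Lagrange.basis (Finset.range (r + 1)) (cEv r) k =
      (((List.range (r + 1)).filter (· ≠ k)).map
        fun j => Lagrange.basisDivisor (cEv r k) (cEv r j)).prod := by
    rw [Lagrange.basis, ← List.prod_toFinset _ (List.nodup_range.filter _)]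
    congr 1
    ext j
    simp [and_comm]
  rw [hlist, map_list_prod, List.map_map, Pk]
  simp [Lagrange.basisDivisor, Function.comp_def, Algebra.smul_def]

lemma eval_cEv_basis {r : ℕ} (hr : 2 ≤ r) {k m : ℕ} (hk : k ≤ r) (hm : m ≤ 2 * r) :
    (Lagrange.basis (Finset.range (r + 1)) (cEv r) k).eval (cEv r m) =
      if m = k ∨ m + k = 2 * r then 1 else 0 := by
  split_ifs with h
  · have hinj : Set.InjOn (cEv r) (Finset.range (r + 1)) := fun i hi j hj hij => by
      have := (cEv_eq_cEv_iff hr).mp hij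
      simp only [Finset.coe_range, Set.mem_Iio] at hi hj
      omega
    rw [(cEv_eq_cEv_iff hr).mpr h,
      Lagrange.eval_basis_self hinj (Finset.mem_range_succ_iff.mpr hk)]
  · obtain ⟨j, hj, hjm⟩ : ∃ j ≤ r, m = j ∨ m + j = 2 * r := by
      rcases le_total m r with hmr | hmr
      · exact ⟨m, hmr, .inl rfl⟩
      · exact ⟨2 * r - m, by omega, by omega⟩
    rw [(cEv_eq_cEv_iff hr).mpr hjm,
      Lagrange.eval_basis_of_ne (by omega) (Finset.mem_range_succ_iff.mpr hj)]

lemma eval_signVec_aeval_casimirPoly {r : ℕ} (A : Finset (Fin (2 * r))) (p : ℂ[X]) :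
    MvPolynomial.eval (signVec A) (aeval (casimirPoly r) p) = p.eval (cEv r A.card) := by
  have hC : (MvPolynomial.eval (signVec A)).comp MvPolynomial.C = RingHom.id ℂ :=
    RingHom.ext fun c => MvPolynomial.eval_C c
  rw [aeval_def, hom_eval₂, eval_casimirPoly, MvPolynomial.algebraMap_eq, hC, eval₂_id]

variable {r : ℕ} {τ : Cl r ⊗[ℂ] Cl r →ₗ[ℂ] ℂ}

lemma IsTracial.apply_ppCh_mul_Pk (hr : 2 ≤ r) (hτ : IsTracial τ) (ε ε' : ℂ) {k : ℕ}
    (hk : k ≤ r) :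
    τ (ppCh r ε ε' * Pk r k) = τ 1 / 4 ^ r *
      ((Finset.univ.filter fun A : Finset (Fin (2 * r)) =>
          A.card = k ∨ A.card + k = 2 * r).card *
        ((1 + ε * ε' * (-1) ^ (r + k)) / 4)) := by
  have hterm (A : Finset (Fin (2 * r))) :
      (1 + ε * ε' * (-1) ^ (r + A.card)) / 4 * MvPolynomial.eval (signVec A)
          (aeval (casimirPoly r) (Lagrange.basis (Finset.range (r + 1)) (cEv r) k)) =
        if A.card = k ∨ A.card + k = 2 * r then (1 + ε * ε' * (-1) ^ (r + k)) / 4 else 0 := by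
    rw [eval_signVec_aeval_casimirPoly, eval_cEv_basis hr hk (by simpa using A.card_le_univ),
      mul_ite, mul_one, mul_zero]
    refine if_ctx_congr .rfl (fun hA => ?_) fun _ => rfl
    have hparity : (-1 : ℂ) ^ (r + A.card) = (-1) ^ (r + k) :=
      neg_one_pow_congr (by grind)
    rw [hparity]
  rw [Pk_eq_aeval, sC_eq_diagEval, aeval_algHom_apply, hτ.apply_ppCh_mul_diagEval (by omega),
    Finset.sum_congr rfl fun A _ => hterm A, ← Finset.sum_filter, Finset.sum_const, nsmul_eq_mul]

end Spectrum

theorem proj_traces_odd_r_general {r : ℕ} (hr : 2 ≤ r) {τ : Cl r ⊗[ℂ] Cl r →ₗ[ℂ] ℂ}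
    (hτ : IsTracial τ) (ε ε' : ℂ) :
    (∀ k l : ℕ, k < r → k + l = 2 * r → τ (ppCh r ε ε' * Pk r k) =
      τ 1 / 4 ^ r * ((1 + ε * ε' * (-1) ^ (r + k)) / 2) *
        ((2 * r).factorial / (k.factorial * l.factorial))) ∧
    τ (ppCh r ε ε' * Pk r r) =
      τ 1 / 4 ^ r * ((1 + ε * ε') / 2) * ((2 * r).factorial / (2 * (r.factorial : ℂ) ^ 2)) := by
  refine ⟨fun k l hk hkl => ?_, ?_⟩
  · obtain rfl : l = 2 * r - k := by omega
    have hcard := card_filter_card_eq_or_add_eq (α := Fin (2 * r)) (k := k) (by simpa using hk)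
    rw [Fintype.card_fin] at hcard
    rw [hτ.apply_ppCh_mul_Pk hr ε ε' hk.le, hcard, ← Nat.cast_choose ℂ (by omega)]
    push_cast
    ring
  · have hcard : (Finset.univ.filter fun A : Finset (Fin (2 * r)) =>
        A.card = r ∨ A.card + r = 2 * r).card = (2 * r).choose r := by
      have hself (m : ℕ) : m = r ∨ m + r = 2 * r ↔ m = r := by omega
      simp only [hself, Finset.univ_filter_card_eq, Finset.card_powersetCard, Finset.card_univ,
        Fintype.card_fin]
    have hchoose := Nat.cast_choose ℂ (show r ≤ 2 * r by omega)
    rw [show 2 * r - r = r by omega] at hchoose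
    rw [hτ.apply_ppCh_mul_Pk hr ε ε' le_rfl, hcard, hchoose, (Even.add_self r).neg_one_pow]
    ring

/-- traces of the chiral spectral projectors for odd `r ≥ 3`. -/
theorem proj_traces_odd_r (r : ℕ) (hr : 3 ≤ r) (hro : Odd r)
    (φ : Cl r ≃ₐ[ℂ] Matrix (Fin (2^r)) (Fin (2^r)) ℂ)
    (Φ : Cl r ⊗[ℂ] Cl r →ₐ[ℂ] Matrix (Fin (2^r) × Fin (2^r)) (Fin (2^r) × Fin (2^r)) ℂ)
    (hΦ : ∀ a b : Cl r, Φ (a ⊗ₜ[ℂ] b) = Matrix.kroneckerMap (· * ·) (φ a) (φ b))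
    (ε : ℂ) (hε : ε = 1 ∨ ε = -1) :
    (∀ m : ℕ, m ≤ (r-1)/2 →
      Matrix.trace (Φ (ppCh r ε (-ε) * Pk r (2*m)))
        = ((2*r).factorial : ℂ) / (((2*m).factorial : ℂ) * ((2*r-2*m).factorial : ℂ))) ∧
    (∀ m : ℕ, 1 ≤ m → m ≤ (r-1)/2 →
      Matrix.trace (Φ (ppCh r ε ε * Pk r (2*m-1)))
        = ((2*r).factorial : ℂ) / (((2*m-1).factorial : ℂ) * ((2*r-2*m+1).factorial : ℂ))) ∧
    Matrix.trace (Φ (ppCh r ε ε * Pk r r))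
        = ((2*r).factorial : ℂ) / (2 * ((r.factorial : ℂ))^2) := by
  let τ : Cl r ⊗[ℂ] Cl r →ₗ[ℂ] ℂ := Matrix.traceLinearMap _ ℂ ℂ ∘ₗ Φ.toLinearMap
  have hτ : IsTracial τ := fun x y => by
    simpa [τ] using Matrix.trace_mul_comm (Φ x) (Φ y)
  have hτ1 : τ 1 / 4 ^ r = 1 := by norm_num [τ, Matrix.trace_one, ← mul_pow]
  have hεε : ε * ε = 1 := by rcases hε with rfl | rfl <;> norm_num
  have traces ε' := proj_traces_odd_r_general (by omega) hτ ε ε'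
  refine ⟨fun m _ => ((traces _).1 (2 * m) (2 * r - 2 * m) (by omega) (by omega)).trans ?_,
    fun m _ _ => ((traces _).1 (2 * m - 1) (2 * r - 2 * m + 1) (by omega) (by omega)).trans ?_,
    (traces _).2.trans ?_⟩
  · simp [hτ1, hεε, (hro.add_even (even_two_mul m)).neg_one_pow]
  · have hodd : Odd (2 * m - 1) := ⟨m - 1, by omega⟩
    simp [hτ1, hεε, (hro.add_odd hodd).neg_one_pow]
  · simp [hτ1, hεε]

end
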